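/- arXiv:2212.14756 — 9 statements merged into one kernel-verified Lean document; each statement's English description precedes it below -/
import Mathlib

section
/- Let (A, g, h, f, p) be a tense H-algebra. Then for all x, y ∈ A: (T11) g(x) ≤ y if and only if h(y) ≤ x; and (T12) x ≤ p(y) if and only if y ≤ f(x). -/
/-!
The meet and join laws make all four operations antitone. The inequalities `h (g x) ≤ x` and
`g (h x) ≤ x` are then the unit and counit of a Galois connection from the order dual of `A`
to `A`, while `x ≤ p (f x)` and `x ≤ f (p x)` are those of one from `A` to its order dual.
-/

structure IsTenseH {A : Type*} [HeytingAlgebra A] (g h f p : A → A) : Prop where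
  t1g : g ⊤ = ⊥
  t1h : h ⊤ = ⊥
  t2f : f ⊥ = ⊤
  t2p : p ⊥ = ⊤
  t3g : ∀ x y : A, g (x ⊓ y) = g x ⊔ g y
  t3h : ∀ x y : A, h (x ⊓ y) = h x ⊔ h y
  t4f : ∀ x y : A, f (x ⊔ y) = f x ⊓ f y
  t4p : ∀ x y : A, p (x ⊔ y) = p x ⊓ p y
  t5gh : ∀ x : A, g (h x) ≤ x
  t5hg : ∀ x : A, h (g x) ≤ x
  t6pf : ∀ x : A, x ≤ p (f x)
  t6fp : ∀ x : A, x ≤ f (p x)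
  t7g : ∀ x y : A, g x ⊓ f y ≤ g (x ⊔ y)
  t7h : ∀ x y : A, h x ⊓ p y ≤ h (x ⊔ y)
  t8f : ∀ x y : A, f (x ⊓ y) ≤ f x ⊔ g y
  t8p : ∀ x y : A, p (x ⊓ y) ≤ p x ⊔ h y

def IsLatFilter {A : Type*} [HeytingAlgebra A] (F : Set A) : Prop :=
  F.Nonempty ∧ (∀ x y : A, x ∈ F → x ≤ y → y ∈ F) ∧ (∀ x y : A, x ∈ F → y ∈ F → x ⊓ y ∈ F)

def IsLatIdeal {A : Type*} [HeytingAlgebra A] (I : Set A) : Prop :=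
  I.Nonempty ∧ (∀ x y : A, x ∈ I → y ≤ x → y ∈ I) ∧ (∀ x y : A, x ∈ I → y ∈ I → x ⊔ y ∈ I)

def IsPrimeFilter {A : Type*} [HeytingAlgebra A] (F : Set A) : Prop :=
  IsLatFilter F ∧ (⊥ : A) ∉ F ∧ ∀ x y : A, x ⊔ y ∈ F → x ∈ F ∨ y ∈ F

def IsNegTenseFilter {A : Type*} [HeytingAlgebra A] (g h f p : A → A) (F : Set A) : Prop :=
  IsLatFilter F ∧
    ∀ u ∈ ({g, h, f, p} : Set (A → A)), ∀ x y : A, x ⇨ y ∈ F → u y ⇨ u x ∈ F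

def thetaF {A : Type*} [HeytingAlgebra A] (F : Set A) (x y : A) : Prop :=
  (x ⇨ y) ⊓ (y ⇨ x) ∈ F

def IsTenseCongruence {A : Type*} [HeytingAlgebra A] (g h f p : A → A)
    (θ : A → A → Prop) : Prop :=
  Equivalence θ ∧
    (∀ x₁ y₁ x₂ y₂ : A, θ x₁ y₁ → θ x₂ y₂ → θ (x₁ ⊓ x₂) (y₁ ⊓ y₂)) ∧
    (∀ x₁ y₁ x₂ y₂ : A, θ x₁ y₁ → θ x₂ y₂ → θ (x₁ ⊔ x₂) (y₁ ⊔ y₂)) ∧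
    (∀ x₁ y₁ x₂ y₂ : A, θ x₁ y₁ → θ x₂ y₂ → θ (x₁ ⇨ x₂) (y₁ ⇨ y₂)) ∧
    ∀ u ∈ ({g, h, f, p} : Set (A → A)), ∀ x y : A, θ x y → θ (u x) (u y)

def Nop {A : Type*} [HeytingAlgebra A] (g h : A → A) (a : A) : A :=
  (g a ⇨ ⊥) ⊓ (h a ⇨ ⊥)

def NIter {A : Type*} [HeytingAlgebra A] (N : A → A) : ℕ → A → A
  | 0, a => a
  | n + 1, a => N (NIter N n a)

def NPar {A : Type*} [HeytingAlgebra A] (N : A → A) : ℕ → A → A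
  | 0, a => NIter N 0 a
  | k + 1, a => NPar N k a ⊓ NIter N (k + 1) a

open OrderDual

theorem antitone_of_map_inf {α β : Type*} [SemilatticeInf α] [SemilatticeSup β] {u : α → β}
    (hu : ∀ x y, u (x ⊓ y) = u x ⊔ u y) : Antitone u :=
  antitoneOn_univ.1 (.of_map_inf fun x _ y _ => hu x y)

theorem antitone_of_map_sup {α β : Type*} [SemilatticeSup α] [SemilatticeInf β] {u : α → β}
    (hu : ∀ x y, u (x ⊔ y) = u x ⊓ u y) : Antitone u :=
  antitoneOn_univ.1 (.of_map_sup fun x _ y _ => hu x y)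

section AntitoneGaloisConnection

variable {α β : Type*} [Preorder α] [Preorder β]

theorem galoisConnection_comp_ofDual_of_antitone {g : α → β} {h : β → α}
    (hg : Antitone g) (hh : Antitone h) (hgh : ∀ y, g (h y) ≤ y) (hhg : ∀ x, h (g x) ≤ x) :
    GaloisConnection (g ∘ ofDual) (toDual ∘ h) :=
  .monotone_intro hh.dual_right hg.dual_left (fun x => hhg (ofDual x)) hgh

theorem galoisConnection_toDual_comp_of_antitone {f : α → β} {p : β → α}
    (hf : Antitone f) (hp : Antitone p) (hpf : ∀ x, x ≤ p (f x)) (hfp : ∀ y, y ≤ f (p y)) :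
    GaloisConnection (toDual ∘ f) (p ∘ ofDual) :=
  .monotone_intro hp.dual_left hf.dual_right hpf (fun y => hfp (ofDual y))

theorem stmt1_general {g f : α → β} {h p : β → α}
    (hg : Antitone g) (hh : Antitone h) (hf : Antitone f) (hp : Antitone p)
    (hgh : ∀ y, g (h y) ≤ y) (hhg : ∀ x, h (g x) ≤ x)
    (hpf : ∀ x, x ≤ p (f x)) (hfp : ∀ y, y ≤ f (p y)) :
    (∀ x y, g x ≤ y ↔ h y ≤ x) ∧ (∀ x y, x ≤ p y ↔ y ≤ f x) :=
  ⟨fun x y => galoisConnection_comp_ofDual_of_antitone hg hh hgh hhg (toDual x) y,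
    fun x y => (galoisConnection_toDual_comp_of_antitone hf hp hpf hfp x (toDual y)).symm⟩

end AntitoneGaloisConnection

theorem stmt1 {A : Type*} [HeytingAlgebra A] (g h f p : A → A)
    (H : IsTenseH g h f p) :
    (∀ x y : A, g x ≤ y ↔ h y ≤ x) ∧ (∀ x y : A, x ≤ p y ↔ y ≤ f x) :=
  stmt1_general (antitone_of_map_inf H.t3g) (antitone_of_map_inf H.t3h)
    (antitone_of_map_sup H.t4f) (antitone_of_map_sup H.t4p) H.t5gh H.t5hg H.t6pf H.t6fp
end

section
/- Let X be a set, R a binary relation on X, and R⁻¹ its converse. Define operators on the powerset of X by g_R(U) = {x ∈ X : ∃y, R x y and y ∉ U}, h_R(U) = {x ∈ X : ∃y, R y x and y ∉ U}, f_R(U) = {x ∈ X : ∀y, R x y implies y ∉ U}, p_R(U) = {x ∈ X : ∀y, R y x implies y ∉ U}. Then these four operators on the Heyting algebra of subsets of X satisfy all the tense H-algebra axioms (T1)–(T8): g_R(X) = ∅ = h_R(X); f_R(∅) = X = p_R(∅); g_R(U ∩ V) = g_R(U) ∪ g_R(V) and h_R(U ∩ V) = h_R(U) ∪ h_R(V);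 f_R(U ∪ V) = f_R(U) ∩ f_R(V) and p_R(U ∪ V) = p_R(U) ∩ p_R(V); g_R(h_R(U)) ⊆ U and h_R(g_R(U)) ⊆ U; U ⊆ p_R(f_R(U)) and U ⊆ f_R(p_R(U)); g_R(U) ∩ f_R(V) ⊆ g_R(U ∪ V) and h_R(U) ∩ p_R(V) ⊆ h_R(U ∪ V); f_R(U ∩ V) ⊆ f_R(U) ∪ g_R(V) and p_R(U ∩ V) ⊆ p_R(U) ∪ h_R(V). -/
def gR {α : Type*} (R : α → α → Prop) (U : Set α) : Set α :=
  {x | ∃ y, R x y ∧ y ∉ U}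

def hR {α : Type*} (R : α → α → Prop) (U : Set α) : Set α :=
  {x | ∃ y, R y x ∧ y ∉ U}

def fR {α : Type*} (R : α → α → Prop) (U : Set α) : Set α :=
  {x | ∀ y, R x y → y ∉ U}

def pR {α : Type*} (R : α → α → Prop) (U : Set α) : Set α :=
  {x | ∀ y, R y x → y ∉ U}

/-!
On a Boolean algebra, the operators `x ↦ d xᶜ` and `x ↦ (d x)ᶜ` satisfy the mixed axioms (T7) and
(T8) as soon as `d` preserves binary joins: both are the inequality `d x \ d y ≤ d (x \ y)`. If `d`
and `e` are conjugate in the sense of Jónsson and Tarski, then `d` is lower adjoint to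
`y ↦ (e yᶜ)ᶜ`. Hence `d` preserves finite joins, which gives (T1)–(T4), while the counit and the
unit of the adjunction are (T5) and (T6). The preimage and image operators of a relation are
conjugate: both sides of the conjugacy say that no element of the one set is related to an element
of the other.
-/

theorem sdiff_map_le_map_sdiff {A B : Type*} [GeneralizedCoheytingAlgebra A]
    [GeneralizedCoheytingAlgebra B] {d : A → B} (map_sup : ∀ x y, d (x ⊔ y) = d x ⊔ d y)
    (x y : A) : d x \ d y ≤ d (x \ y) := by
  rw [sdiff_le_iff, ← map_sup, sup_sdiff_self_right, map_sup]
  exact le_sup_right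

/-- Conjugate operators in the sense of Jónsson and Tarski, such as the future and past possibility
operators of a tense logic. Jónsson and Tarski take `A = B`; two algebras are allowed here so that
the preimage and image operators of a relation between different types qualify. -/
def IsConjugate {A B : Type*} [PartialOrder A] [OrderBot A] [PartialOrder B] [OrderBot B]
    (d : A → B) (e : B → A) : Prop :=
  ∀ x y, Disjoint (d x) y ↔ Disjoint x (e y)

namespace IsConjugate

theorem symm {A B : Type*} [PartialOrder A] [OrderBot A] [PartialOrder B] [OrderBot B]
    {d : A → B} {e : B → A} (hde : IsConjugate d e) : IsConjugate e d := fun x y ↦ by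
  rw [disjoint_comm, ← hde, disjoint_comm]

variable {A B : Type*} [BooleanAlgebra A] [BooleanAlgebra B] {d : A → B} {e : B → A}

theorem galoisConnection (hde : IsConjugate d e) :
    GaloisConnection d fun y ↦ (e yᶜ)ᶜ := fun x y ↦ by
  rw [← disjoint_compl_right_iff, hde, le_compl_iff_disjoint_right]

theorem map_bot (hde : IsConjugate d e) : d ⊥ = ⊥ :=
  hde.galoisConnection.l_bot

theorem map_sup (hde : IsConjugate d e) (x y : A) : d (x ⊔ y) = d x ⊔ d y :=
  hde.galoisConnection.l_sup

theorem map_compl_map_compl_le (hde : IsConjugate d e) (y : B) : d (e yᶜ)ᶜ ≤ y :=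
  hde.galoisConnection.l_u_le y

theorem le_compl_map_compl_map (hde : IsConjugate d e) (x : A) : x ≤ (e (d x)ᶜ)ᶜ :=
  hde.galoisConnection.le_u_l x

theorem map_compl_inf_compl_map_le (hde : IsConjugate d e) (x y : A) :
    d xᶜ ⊓ (d y)ᶜ ≤ d (x ⊔ y)ᶜ :=
  calc
    d xᶜ ⊓ (d y)ᶜ = d xᶜ \ d y := sdiff_eq.symm
    _ ≤ d (xᶜ \ y) := sdiff_map_le_map_sdiff hde.map_sup xᶜ y
    _ = d (x ⊔ y)ᶜ := by rw [sdiff_eq, compl_sup]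

theorem compl_map_inf_le (hde : IsConjugate d e) (x y : A) :
    (d (x ⊓ y))ᶜ ≤ (d x)ᶜ ⊔ d yᶜ :=
  calc
    (d (x ⊓ y))ᶜ = (d (x \ yᶜ))ᶜ := by rw [sdiff_compl]
    _ ≤ (d x \ d yᶜ)ᶜ := compl_le_compl (sdiff_map_le_map_sdiff hde.map_sup x yᶜ)
    _ = (d x)ᶜ ⊔ d yᶜ := by rw [sdiff_eq, compl_inf, compl_compl]

end IsConjugate

theorem stmt3_general {A : Type*} [BooleanAlgebra A] {d e : A → A} (hde : IsConjugate d e) :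
    IsTenseH (fun x ↦ d xᶜ) (fun x ↦ e xᶜ) (fun x ↦ (d x)ᶜ) (fun x ↦ (e x)ᶜ) where
  t1g := by rw [compl_top, hde.map_bot]
  t1h := by rw [compl_top, hde.symm.map_bot]
  t2f := by rw [hde.map_bot, compl_bot]
  t2p := by rw [hde.symm.map_bot, compl_bot]
  t3g x y := by rw [compl_inf, hde.map_sup]
  t3h x y := by rw [compl_inf, hde.symm.map_sup]
  t4f x y := by rw [hde.map_sup, compl_sup]
  t4p x y := by rw [hde.symm.map_sup, compl_sup]
  t5gh := hde.map_compl_map_compl_le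
  t5hg := hde.symm.map_compl_map_compl_le
  t6pf := hde.le_compl_map_compl_map
  t6fp := hde.symm.le_compl_map_compl_map
  t7g := hde.map_compl_inf_compl_map_le
  t7h := hde.symm.map_compl_inf_compl_map_le
  t8f := hde.compl_map_inf_le
  t8p := hde.symm.compl_map_inf_le

theorem isConjugate_preimage_image {α β : Type*} (R : SetRel α β) :
    IsConjugate R.preimage R.image := fun t s ↦ by
  rw [Set.disjoint_left, Set.disjoint_left]
  exact ⟨fun h b hb ⟨a, ha, hab⟩ ↦ h ⟨b, hb, hab⟩ ha, fun h a ⟨b, hb, hab⟩ ha ↦ h hb ⟨a, ha, hab⟩⟩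

section Relation

variable {α : Type*} (R : α → α → Prop)

theorem gR_eq_preimage_compl : gR R = fun U ↦ SetRel.preimage {(x, y) | R x y} Uᶜ := by
  ext U x
  exact exists_congr fun _ ↦ and_comm

theorem hR_eq_image_compl : hR R = fun U ↦ SetRel.image {(x, y) | R x y} Uᶜ := by
  ext U x
  exact exists_congr fun _ ↦ and_comm

theorem fR_eq_compl_preimage : fR R = fun U ↦ (SetRel.preimage {(x, y) | R x y} U)ᶜ := by
  ext U x
  simp [fR, imp_not_comm]

theorem pR_eq_compl_image : pR R = fun U ↦ (SetRel.image {(x, y) | R x y} U)ᶜ := by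
  ext U x
  simp [pR, imp_not_comm]

end Relation

theorem stmt3 {α : Type*} (R : α → α → Prop) :
    IsTenseH (A := Set α) (gR R) (hR R) (fR R) (pR R) := by
  rw [gR_eq_preimage_compl, hR_eq_image_compl, fR_eq_compl_preimage, pR_eq_compl_image]
  exact stmt3_general (isConjugate_preimage_image {(x, y) | R x y})
end

section
/- Let (A, g, h, f, p) be a tense H-algebra and let F be a filter of A. Then F is a negative tense filter if and only if the following four conditions hold for all x, y ∈ A: (a) g(x) ⇨ y ∈ F implies h(y) ⇨ x ∈ F; (b) h(x) ⇨ y ∈ F implies g(y) ⇨ x ∈ F; (c) x ⇨ p(y) ∈ F implies y ⇨ f(x) ∈ F; (d) x ⇨ f(y) ∈ F implies y ⇨ p(x) ∈ F. -/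
/-!
For an upward closed set `F`, the relation `x ⇨ y ∈ F` absorbs `≤` on both sides. Composing it with
the inequalities of (T5) and (T6) shows that each of the four operations reverses this relation
exactly when one half of an antitone adjunction modulo `F` with its partner holds: (a) is equivalent
to the condition on `h`, (b) to the one on `g`, (c) to the one on `f` and (d) to the one on `p`.
-/

/-- Antitonicity of `u` modulo `F` and `G`, where `x ⇨ y ∈ F` encodes that `x` is below `y`
modulo `F`. For filters this says that `u` induces an antitone map between the quotients. -/
def AntitoneModulo {A B : Type*} [HImp A] [HImp B] (F : Set A) (G : Set B) (u : A → B) : Prop :=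
  ∀ x y : A, x ⇨ y ∈ F → u y ⇨ u x ∈ G

section Adjunction

variable {A B : Type*} [GeneralizedHeytingAlgebra A] [GeneralizedHeytingAlgebra B]
  {F : Set A} {G : Set B} {u : A → B} {v : B → A}

theorem antitoneModulo_iff_of_le_comp (hF : IsUpperSet F) (hG : IsUpperSet G)
    (le_vu : ∀ x, x ≤ v (u x)) (le_uv : ∀ y, y ≤ u (v y)) :
    AntitoneModulo F G u ↔ ∀ x y, x ⇨ v y ∈ F → y ⇨ u x ∈ G where
  mp hu x y hxy := hG (himp_le_himp_right (le_uv y)) (hu x (v y) hxy)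
  mpr adj x y hxy := adj x (u y) (hF (himp_le_himp_left (le_vu y)) hxy)

theorem antitoneModulo_iff_of_comp_le (hF : IsUpperSet F) (hG : IsUpperSet G)
    (vu_le : ∀ x, v (u x) ≤ x) (uv_le : ∀ y, u (v y) ≤ y) :
    AntitoneModulo F G u ↔ ∀ y x, v y ⇨ x ∈ F → u x ⇨ y ∈ G where
  mp hu y x hyx := hG (himp_le_himp_left (uv_le y)) (hu (v y) x hyx)
  mpr adj x y hxy := adj (u x) y (hF (himp_le_himp_right (vu_le x)) hxy)

end Adjunction

theorem IsLatFilter.isUpperSet {A : Type*} [HeytingAlgebra A] {F : Set A} (hF : IsLatFilter F) :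
    IsUpperSet F :=
  fun x y hxy hx => hF.2.1 x y hx hxy

theorem stmt7_general {A : Type*} [GeneralizedHeytingAlgebra A] {g h f p : A → A}
    (gh_le : ∀ x, g (h x) ≤ x) (hg_le : ∀ x, h (g x) ≤ x)
    (le_pf : ∀ x, x ≤ p (f x)) (le_fp : ∀ x, x ≤ f (p x))
    {F : Set A} (hF : IsUpperSet F) :
    (∀ u ∈ ({g, h, f, p} : Set (A → A)), AntitoneModulo F F u) ↔
      ((∀ x y : A, g x ⇨ y ∈ F → h y ⇨ x ∈ F) ∧
        (∀ x y : A, h x ⇨ y ∈ F → g y ⇨ x ∈ F) ∧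
        (∀ x y : A, x ⇨ p y ∈ F → y ⇨ f x ∈ F) ∧
        (∀ x y : A, x ⇨ f y ∈ F → y ⇨ p x ∈ F)) := by
  have hg := antitoneModulo_iff_of_comp_le hF hF hg_le gh_le
  have hh := antitoneModulo_iff_of_comp_le hF hF gh_le hg_le
  have hf := antitoneModulo_iff_of_le_comp hF hF le_pf le_fp
  have hp := antitoneModulo_iff_of_le_comp hF hF le_fp le_pf
  simp only [Set.mem_insert_iff, Set.mem_singleton_iff, forall_eq_or_imp, forall_eq]
  rw [hg, hh, hf, hp, and_left_comm]

theorem stmt7 {A : Type*} [HeytingAlgebra A] (g h f p : A → A)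
    (H : IsTenseH g h f p) (F : Set A) (hF : IsLatFilter F) :
    IsNegTenseFilter g h f p F ↔
      ((∀ x y : A, g x ⇨ y ∈ F → h y ⇨ x ∈ F) ∧
        (∀ x y : A, h x ⇨ y ∈ F → g y ⇨ x ∈ F) ∧
        (∀ x y : A, x ⇨ p y ∈ F → y ⇨ f x ∈ F) ∧
        (∀ x y : A, x ⇨ f y ∈ F → y ⇨ p x ∈ F)) :=
  (and_iff_right hF).trans (stmt7_general H.t5gh H.t5hg H.t6pf H.t6fp hF.isUpperSet)
end

section
/- Let (A, g, h, f, p) be a tense H-algebra and let F be a negative tense filter of A. Define the relation θ_F on A by (x, y) ∈ θ_F if and only if (x ⇨ y) ⊓ (y ⇨ x) ∈ F. Then θ_F is an equivalence relation on A that is compatible with ⊓, ⊔, ⇨, g, h, f and p (i.e., if (x₁,y₁), (x₂,y₂) ∈ θ_F then (x₁ ⊓ x₂, y₁ ⊓ y₂), (x₁ ⊔ x₂, y₁ ⊔ y₂), (x₁ ⇨ x₂, y₁ ⇨ y₂) ∈ θ_F, and if (x,y) ∈ θ_F then (u(x), u(y)) ∈ θ_F for each u ∈ {g,h,f,p}).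 -/
/-
Modulo a filter `F`, the relation `x ⇨ y ∈ F` is a preorder for which `⊓` and `⊔` are monotone and
`⇨` is antitone in its first and monotone in its second argument. A negative tense filter is one
for which `g`, `h`, `f` and `p` are antitone as well. The relation `thetaF F` is the symmetric part
of this preorder, so every one of these operations preserves it.
-/

section GeneralizedHeytingAlgebra

variable {A : Type*} [GeneralizedHeytingAlgebra A] (x₁ y₁ x₂ y₂ : A)

theorem himp_inf_himp_le_inf_himp_inf : (x₁ ⇨ y₁) ⊓ (x₂ ⇨ y₂) ≤ x₁ ⊓ x₂ ⇨ y₁ ⊓ y₂ := by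
  rw [himp_inf_distrib]
  exact inf_le_inf (himp_le_himp_right inf_le_left) (himp_le_himp_right inf_le_right)

theorem himp_inf_himp_le_sup_himp_sup : (x₁ ⇨ y₁) ⊓ (x₂ ⇨ y₂) ≤ x₁ ⊔ x₂ ⇨ y₁ ⊔ y₂ := by
  rw [sup_himp_distrib]
  exact inf_le_inf (himp_le_himp_left le_sup_left) (himp_le_himp_left le_sup_right)

theorem himp_inf_himp_le_himp_himp_himp :
    (y₁ ⇨ x₁) ⊓ (x₂ ⇨ y₂) ≤ (x₁ ⇨ x₂) ⇨ (y₁ ⇨ y₂) := by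
  rw [le_himp_iff]
  calc (y₁ ⇨ x₁) ⊓ (x₂ ⇨ y₂) ⊓ (x₁ ⇨ x₂)
      = (y₁ ⇨ x₁) ⊓ (x₁ ⇨ x₂) ⊓ (x₂ ⇨ y₂) := inf_right_comm _ _ _
    _ ≤ (y₁ ⇨ x₂) ⊓ (x₂ ⇨ y₂) := inf_le_inf_right _ (himp_triangle _ _ _)
    _ ≤ y₁ ⇨ y₂ := himp_triangle _ _ _

end GeneralizedHeytingAlgebra

namespace IsLatFilter

variable {A : Type*} [HeytingAlgebra A] {F : Set A} {a b c x y x₁ y₁ x₂ y₂ : A}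

theorem mem_of_le (hF : IsLatFilter F) (ha : a ∈ F) (hab : a ≤ b) : b ∈ F :=
  hF.2.1 a b ha hab

theorem inf_mem (hF : IsLatFilter F) (ha : a ∈ F) (hb : b ∈ F) : a ⊓ b ∈ F :=
  hF.2.2 a b ha hb

theorem top_mem (hF : IsLatFilter F) : ⊤ ∈ F :=
  let ⟨_, ha⟩ := hF.1
  hF.mem_of_le ha le_top

theorem inf_mem_iff (hF : IsLatFilter F) : a ⊓ b ∈ F ↔ a ∈ F ∧ b ∈ F :=
  ⟨fun h => ⟨hF.mem_of_le h inf_le_left, hF.mem_of_le h inf_le_right⟩,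
    fun ⟨ha, hb⟩ => hF.inf_mem ha hb⟩

theorem mem_of_inf_le (hF : IsLatFilter F) (ha : a ∈ F) (hb : b ∈ F) (h : a ⊓ b ≤ c) : c ∈ F :=
  hF.mem_of_le (hF.inf_mem ha hb) h

theorem himp_mem_trans (hF : IsLatFilter F) (hab : a ⇨ b ∈ F) (hbc : b ⇨ c ∈ F) : a ⇨ c ∈ F :=
  hF.mem_of_inf_le hab hbc (himp_triangle a b c)

theorem thetaF_iff (hF : IsLatFilter F) : thetaF F x y ↔ x ⇨ y ∈ F ∧ y ⇨ x ∈ F :=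
  hF.inf_mem_iff

theorem thetaF_equivalence (hF : IsLatFilter F) : Equivalence (thetaF F) where
  refl x := by
    rw [hF.thetaF_iff, himp_self]
    exact ⟨hF.top_mem, hF.top_mem⟩
  symm hxy := hF.thetaF_iff.2 (hF.thetaF_iff.1 hxy).symm
  trans hxy hyz := by
    rw [hF.thetaF_iff] at hxy hyz ⊢
    exact ⟨hF.himp_mem_trans hxy.1 hyz.1, hF.himp_mem_trans hyz.2 hxy.2⟩

theorem thetaF_inf (hF : IsLatFilter F) (h₁ : thetaF F x₁ y₁) (h₂ : thetaF F x₂ y₂) :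
    thetaF F (x₁ ⊓ x₂) (y₁ ⊓ y₂) := by
  rw [hF.thetaF_iff] at h₁ h₂ ⊢
  exact ⟨hF.mem_of_inf_le h₁.1 h₂.1 (himp_inf_himp_le_inf_himp_inf ..),
    hF.mem_of_inf_le h₁.2 h₂.2 (himp_inf_himp_le_inf_himp_inf ..)⟩

theorem thetaF_sup (hF : IsLatFilter F) (h₁ : thetaF F x₁ y₁) (h₂ : thetaF F x₂ y₂) :
    thetaF F (x₁ ⊔ x₂) (y₁ ⊔ y₂) := by
  rw [hF.thetaF_iff] at h₁ h₂ ⊢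
  exact ⟨hF.mem_of_inf_le h₁.1 h₂.1 (himp_inf_himp_le_sup_himp_sup ..),
    hF.mem_of_inf_le h₁.2 h₂.2 (himp_inf_himp_le_sup_himp_sup ..)⟩

theorem thetaF_himp (hF : IsLatFilter F) (h₁ : thetaF F x₁ y₁) (h₂ : thetaF F x₂ y₂) :
    thetaF F (x₁ ⇨ x₂) (y₁ ⇨ y₂) := by
  rw [hF.thetaF_iff] at h₁ h₂ ⊢
  exact ⟨hF.mem_of_inf_le h₁.2 h₂.1 (himp_inf_himp_le_himp_himp_himp ..),
    hF.mem_of_inf_le h₁.1 h₂.2 (himp_inf_himp_le_himp_himp_himp ..)⟩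

theorem thetaF_map_of_himp_mem {B : Type*} [HeytingAlgebra B] {G : Set B} {u : A → B}
    (hF : IsLatFilter F) (hG : IsLatFilter G)
    (hu : ∀ x y : A, x ⇨ y ∈ F → u y ⇨ u x ∈ G) (h : thetaF F x y) :
    thetaF G (u x) (u y) := by
  rw [hF.thetaF_iff] at h
  rw [hG.thetaF_iff]
  exact ⟨hu y x h.2, hu x y h.1⟩

end IsLatFilter

theorem stmt8_general {A : Type*} [HeytingAlgebra A] (g h f p : A → A)
    (F : Set A) (hF : IsNegTenseFilter g h f p F) :
    IsTenseCongruence g h f p (thetaF F) := by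
  obtain ⟨hFil, hAnti⟩ := hF
  exact ⟨hFil.thetaF_equivalence,
    fun _ _ _ _ => hFil.thetaF_inf,
    fun _ _ _ _ => hFil.thetaF_sup,
    fun _ _ _ _ => hFil.thetaF_himp,
    fun u hu _ _ => hFil.thetaF_map_of_himp_mem hFil (hAnti u hu)⟩

theorem stmt8 {A : Type*} [HeytingAlgebra A] (g h f p : A → A)
    (H : IsTenseH g h f p) (F : Set A) (hF : IsNegTenseFilter g h f p F) :
    IsTenseCongruence g h f p (thetaF F) :=
  stmt8_general g h f p F hF
end

section
/- Let A be a Heyting algebra, let u : A → A be antitone (x ≤ y implies u(y) ≤ u(x)), and let a ∈ A. Then an element z ∈ A is a lower bound of the set {(u(b) ⇨ u(c)) ⊓ (u(c) ⇨ u(b)) : b, c ∈ A with a ≤ (b ⇨ c) ⊓ (c ⇨ b)} if and only if z is a lower bound of the set {u(a ⊓ b) ⇨ u(b) : b ∈ A}. In particular, whenever one of the two sets has an infimum, so does the other, and the infima coincide. -/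
/-!
For antitone `u`, each `u (a ⊓ b) ⇨ u b` equals `u b ⇔ u (a ⊓ b)`, and `a ≤ b ⇔ (a ⊓ b)`; so the
second set is contained in the first. Conversely, if `a ≤ b ⇔ c` then `a ⊓ b ≤ c` and `a ⊓ c ≤ b`,
so `u c ≤ u (a ⊓ b)` and `u b ≤ u (a ⊓ c)`; hence `u b ⇔ u c` lies above the meet of two elements
of the second set.
-/

section GeneralizedHeytingAlgebra

open scoped symmDiff

variable {A B : Type*} [GeneralizedHeytingAlgebra A] [GeneralizedHeytingAlgebra B] {u : A → B}

theorem le_bihimp_inf (a b : A) : a ≤ b ⇔ (a ⊓ b) :=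
  le_bihimp (inf_le_left.trans inf_le_right) (inf_comm b a).le

theorem bihimp_map_inf_eq_himp (hu : Antitone u) (a b : A) :
    u b ⇔ u (a ⊓ b) = u (a ⊓ b) ⇨ u b :=
  bihimp_of_ge (hu inf_le_right)

theorem himp_inf_himp_le_bihimp_map (hu : Antitone u) {a b c : A} (h : a ≤ b ⇔ c) :
    (u (a ⊓ b) ⇨ u b) ⊓ (u (a ⊓ c) ⇨ u c) ≤ u b ⇔ u c := by
  obtain ⟨hcb, hbc⟩ := le_bihimp_iff.1 h
  rw [inf_comm] at hcb hbc
  exact inf_le_inf (himp_le_himp_right (hu hbc)) (himp_le_himp_right (hu hcb))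

theorem stmt11_general (hu : Antitone u) (a : A) :
    lowerBounds {w : B | ∃ b c : A,
        a ≤ (b ⇨ c) ⊓ (c ⇨ b) ∧ w = (u b ⇨ u c) ⊓ (u c ⇨ u b)} =
      lowerBounds {w : B | ∃ b : A, w = u (a ⊓ b) ⇨ u b} := by
  -- `bihimp` swaps its arguments: `(b ⇨ c) ⊓ (c ⇨ b)` is `c ⇔ b` by definition.
  apply subset_antisymm
  · apply lowerBounds_mono_set
    rintro _ ⟨b, rfl⟩
    exact ⟨a ⊓ b, b, le_bihimp_inf a b, (bihimp_map_inf_eq_himp hu a b).symm⟩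
  · rintro z hz _ ⟨b, c, hbc, rfl⟩
    calc
      z ≤ (u (a ⊓ c) ⇨ u c) ⊓ (u (a ⊓ b) ⇨ u b) := le_inf (hz ⟨c, rfl⟩) (hz ⟨b, rfl⟩)
      _ ≤ (u b ⇨ u c) ⊓ (u c ⇨ u b) := himp_inf_himp_le_bihimp_map hu hbc

end GeneralizedHeytingAlgebra

theorem stmt11 {A : Type*} [HeytingAlgebra A] (u : A → A)
    (hu : ∀ x y : A, x ≤ y → u y ≤ u x) (a : A) :
    (∀ z : A,
        z ∈ lowerBounds {w : A | ∃ b c : A,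
            a ≤ (b ⇨ c) ⊓ (c ⇨ b) ∧ w = (u b ⇨ u c) ⊓ (u c ⇨ u b)} ↔
          z ∈ lowerBounds {w : A | ∃ b : A, w = u (a ⊓ b) ⇨ u b}) ∧
    (∀ i : A,
        IsGLB {w : A | ∃ b c : A,
            a ≤ (b ⇨ c) ⊓ (c ⇨ b) ∧ w = (u b ⇨ u c) ⊓ (u c ⇨ u b)} i ↔
          IsGLB {w : A | ∃ b : A, w = u (a ⊓ b) ⇨ u b} i) :=
  have h := stmt11_general (fun x y => hu x y) a
  ⟨Set.ext_iff.1 h, fun _ => isGLB_congr h⟩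
end

section
/- Let (A, g, h, f, p) be a tense H-algebra and a ∈ A. Then ¬g(a) is the greatest lower bound of the set {g(a ⊓ b) ⇨ g(b) : b ∈ A}, and ¬h(a) is the greatest lower bound of the set {h(a ⊓ b) ⇨ h(b) : b ∈ A}; here ¬x denotes x ⇨ 0. -/
section AntitoneInf

variable {A B : Type*} [SemilatticeInf A] [GeneralizedHeytingAlgebra B] {u : A → B}

theorem map_inf_himp_map_right (map_inf : ∀ x y, u (x ⊓ y) = u x ⊔ u y) (a b : A) :
    u (a ⊓ b) ⇨ u b = u a ⇨ u b := by
  rw [map_inf, sup_himp_self_right]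

theorem antitone_of_map_inf_eq_sup (map_inf : ∀ x y, u (x ⊓ y) = u x ⊔ u y) : Antitone u :=
  Monotone.of_map_inf (β := Bᵒᵈ) map_inf

theorem stmt12_general [OrderTop A] (map_inf : ∀ x y, u (x ⊓ y) = u x ⊔ u y) (a : A) :
    IsLeast {w : B | ∃ b : A, w = u (a ⊓ b) ⇨ u b} (u a ⇨ u ⊤) := by
  simp only [map_inf_himp_map_right map_inf]
  refine ⟨⟨⊤, rfl⟩, ?_⟩
  rintro _ ⟨b, rfl⟩
  exact himp_le_himp_left (antitone_of_map_inf_eq_sup map_inf le_top)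

end AntitoneInf

theorem stmt12 {A : Type*} [HeytingAlgebra A] (g h f p : A → A)
    (H : IsTenseH g h f p) (a : A) :
    IsGLB {w : A | ∃ b : A, w = g (a ⊓ b) ⇨ g b} (g a ⇨ ⊥) ∧
      IsGLB {w : A | ∃ b : A, w = h (a ⊓ b) ⇨ h b} (h a ⇨ ⊥) :=
  ⟨H.t1g ▸ (stmt12_general H.t3g a).isGLB, H.t1h ▸ (stmt12_general H.t3h a).isGLB⟩
end

section
/- Let (A, g, h, f, p) be a tense H-algebra and a ∈ A. Then ¬g(a) ⊓ ¬h(a) is the greatest lower bound of the set {u(a ⊓ b) ⇨ u(b) : b ∈ A, u ∈ {f, g, h, p}}; here ¬x denotes x ⇨ 0. In particular, ¬g(a) ≤ f(a ⊓ b) ⇨ f(b) and ¬h(a) ≤ p(a ⊓ b) ⇨ p(b) for every b ∈ A. -/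
/-!
Axioms T3 and T8 have a common consequence: `u (b ⊓ a) ≤ u b ⊔ g a` for `u = g` and for `u = f`.
In a Heyting algebra this yields `(g a)ᶜ ≤ u (a ⊓ b) ⇨ u b`, and by T1 the bound is attained at
`u = g`, `b = ⊤`. So `(g a)ᶜ` is the least of the elements `u (a ⊓ b) ⇨ u b` with `u ∈ {f, g}`;
likewise `(h a)ᶜ` for `u ∈ {h, p}`, and the infimum of a union is the meet of the infima.
-/

theorem compl_le_himp_of_le_sup {A : Type*} [HeytingAlgebra A] {x y z : A} (h : z ≤ y ⊔ x) :
    xᶜ ≤ z ⇨ y :=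
  calc
    xᶜ ≤ x ⇨ y := compl_le_himp
    _ = y ⊔ x ⇨ y := (sup_himp_self_left y x).symm
    _ ≤ z ⇨ y := himp_le_himp_right h

section InfToHeyting

variable {A B : Type*} [HeytingAlgebra A] [SemilatticeInf B]

theorem compl_le_map_inf_himp {u : B → A} {a : B} {x : A} (hu : ∀ b, u (b ⊓ a) ≤ u b ⊔ x)
    (b : B) : xᶜ ≤ u (a ⊓ b) ⇨ u b :=
  compl_le_himp_of_le_sup (inf_comm a b ▸ hu b)

variable [OrderTop B]

theorem isLeast_map_inf_himp {U : Set (B → A)} {g : B → A} (hg : g ∈ U) (g_top : g ⊤ = ⊥)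
    {a : B} (hU : ∀ u ∈ U, ∀ b, u (b ⊓ a) ≤ u b ⊔ g a) :
    IsLeast {w : A | ∃ u ∈ U, ∃ b : B, w = u (a ⊓ b) ⇨ u b} (g a)ᶜ := by
  have attained : (g a)ᶜ = g (a ⊓ ⊤) ⇨ g ⊤ := by rw [inf_top_eq, g_top, himp_bot]
  refine ⟨⟨g, hg, ⊤, attained⟩, ?_⟩
  rintro _ ⟨u, hu, b, rfl⟩
  exact compl_le_map_inf_himp (hU u hu) b

theorem isGLB_map_inf_himp_union {U V : Set (B → A)} {g h : B → A} (hg : g ∈ U) (hh : h ∈ V)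
    (g_top : g ⊤ = ⊥) (h_top : h ⊤ = ⊥) {a : B}
    (hU : ∀ u ∈ U, ∀ b, u (b ⊓ a) ≤ u b ⊔ g a) (hV : ∀ v ∈ V, ∀ b, v (b ⊓ a) ≤ v b ⊔ h a) :
    IsGLB {w : A | ∃ u ∈ U ∪ V, ∃ b : B, w = u (a ⊓ b) ⇨ u b} ((g a)ᶜ ⊓ (h a)ᶜ) := by
  simp only [Set.mem_union, or_and_right, exists_or, Set.ofPred_or]
  exact (isLeast_map_inf_himp hg g_top hU).isGLB.union (isLeast_map_inf_himp hh h_top hV).isGLB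

theorem stmt13_general (g h f p : B → A) (g_top : g ⊤ = ⊥) (h_top : h ⊤ = ⊥) (a : B)
    (g_inf_le : ∀ b, g (b ⊓ a) ≤ g b ⊔ g a) (h_inf_le : ∀ b, h (b ⊓ a) ≤ h b ⊔ h a)
    (f_inf_le : ∀ b, f (b ⊓ a) ≤ f b ⊔ g a) (p_inf_le : ∀ b, p (b ⊓ a) ≤ p b ⊔ h a) :
    IsGLB {w : A | ∃ u ∈ ({f, g, h, p} : Set (B → A)), ∃ b : B, w = u (a ⊓ b) ⇨ u b}
        ((g a)ᶜ ⊓ (h a)ᶜ) ∧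
      (∀ b : B, (g a)ᶜ ≤ f (a ⊓ b) ⇨ f b) ∧
      (∀ b : B, (h a)ᶜ ≤ p (a ⊓ b) ⇨ p b) := by
  refine ⟨?_, compl_le_map_inf_himp f_inf_le, compl_le_map_inf_himp p_inf_le⟩
  have bound_fg : ∀ u ∈ ({f, g} : Set (B → A)), ∀ b, u (b ⊓ a) ≤ u b ⊔ g a := by
    rintro u (rfl | rfl)
    exacts [f_inf_le, g_inf_le]
  have bound_hp : ∀ u ∈ ({h, p} : Set (B → A)), ∀ b, u (b ⊓ a) ≤ u b ⊔ h a := by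
    rintro u (rfl | rfl)
    exacts [h_inf_le, p_inf_le]
  have split : ({f, g, h, p} : Set (B → A)) = {f, g} ∪ {h, p} := by
    rw [Set.insert_union, Set.singleton_union]
  rw [split]
  exact isGLB_map_inf_himp_union (by simp) (by simp) g_top h_top bound_fg bound_hp

end InfToHeyting

theorem stmt13 {A : Type*} [HeytingAlgebra A] (g h f p : A → A)
    (H : IsTenseH g h f p) (a : A) :
    IsGLB {w : A | ∃ u ∈ ({f, g, h, p} : Set (A → A)), ∃ b : A, w = u (a ⊓ b) ⇨ u b}
        ((g a ⇨ ⊥) ⊓ (h a ⇨ ⊥)) ∧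
      (∀ b : A, (g a ⇨ ⊥) ≤ f (a ⊓ b) ⇨ f b) ∧
      (∀ b : A, (h a ⇨ ⊥) ≤ p (a ⊓ b) ⇨ p b) := by
  simpa only [himp_bot] using stmt13_general g h f p H.t1g H.t1h a
    (fun b => (H.t3g b a).le) (fun b => (H.t3h b a).le) (H.t8f · a) (H.t8p · a)
end

section
/- Let (A, g, h, f, p) be a tense H-algebra and let S, T be prime filters of A. Then the following are equivalent: (a) for all x, f(x) ∈ S implies x ∉ T, and for all x, x ∉ T implies g(x) ∈ S; (b) for all x, p(x) ∈ T implies x ∉ S, and for all x, x ∉ S implies h(x) ∈ T. -/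
section

variable {α β : Type*} {S : Set α} {T : Set β}

lemma IsLatFilter.isUpperSet_s17 [HeytingAlgebra α] (hS : IsLatFilter S) : IsUpperSet S :=
  fun x y hxy hx => hS.2.1 x y hx hxy

variable [Preorder α]

lemma preimage_subset_compl_symm {f : β → α} {p : α → β} (hS : IsUpperSet S)
    (le_fp : ∀ x, x ≤ f (p x)) (hf : f ⁻¹' S ⊆ Tᶜ) : p ⁻¹' T ⊆ Sᶜ :=
  fun x hpx hx =>
    have hfpx : f (p x) ∈ S := hS (le_fp x) hx
    hf hfpx hpx

lemma compl_subset_preimage_symm {g : β → α} {h : α → β} (hS : IsUpperSet S)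
    (gh_le : ∀ x, g (h x) ≤ x) (hg : Tᶜ ⊆ g ⁻¹' S) : Sᶜ ⊆ h ⁻¹' T := by
  intro x hx
  by_contra hhx
  have hghx : g (h x) ∈ S := hg hhx
  exact hx (hS (gh_le x) hghx)

theorem stmt17_general [Preorder β] {g f : β → α} {h p : α → β}
    (hS : IsUpperSet S) (hT : IsUpperSet T)
    (gh_le : ∀ x, g (h x) ≤ x) (hg_le : ∀ y, h (g y) ≤ y)
    (le_fp : ∀ x, x ≤ f (p x)) (le_pf : ∀ y, y ≤ p (f y)) :
    ((∀ y, f y ∈ S → y ∉ T) ∧ (∀ y, y ∉ T → g y ∈ S)) ↔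
      ((∀ x, p x ∈ T → x ∉ S) ∧ (∀ x, x ∉ S → h x ∈ T)) :=
  ⟨And.imp (preimage_subset_compl_symm hS le_fp) (compl_subset_preimage_symm hS gh_le),
    And.imp (preimage_subset_compl_symm hT le_pf) (compl_subset_preimage_symm hT hg_le)⟩

end

theorem stmt17 {A : Type*} [HeytingAlgebra A] (g h f p : A → A)
    (H : IsTenseH g h f p) (S T : Set A)
    (hS : IsPrimeFilter S) (hT : IsPrimeFilter T) :
    ((∀ x : A, f x ∈ S → x ∉ T) ∧ (∀ x : A, x ∉ T → g x ∈ S)) ↔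
      ((∀ x : A, p x ∈ T → x ∉ S) ∧ (∀ x : A, x ∉ S → h x ∈ T)) :=
  stmt17_general hS.1.isUpperSet_s17 hT.1.isUpperSet_s17 H.t5gh H.t5hg H.t6fp H.t6pf
end

section
/- Let (A, g, h, f, p) be a tense H-algebra, let S be a prime filter of A and a ∈ A. Define, for prime filters S, T: R_A(S, T) if and only if (for all x, f(x) ∈ S implies x ∉ T) and (for all x, x ∉ T implies g(x) ∈ S). Then g(a) ∉ S if and only if for every prime filter T of A with R_A(S, T), one has a ∈ T. -/
/-!
Under the operator laws, `f ⁻¹' S` is an ideal and `g ⁻¹' Sᶜ` is a filter whenever `S` is a prime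
filter, and `R(S, T)` says that the prime filter `T` contains this filter and avoids this ideal.
When `g a ∈ S`, law (T7), `g x ⊓ f y ≤ g (x ⊔ y)`, keeps the filter disjoint from the ideal even
after `a` is adjoined to the ideal, and the prime filter theorem for distributive lattices separates
the two.
-/

open Order

section PrimeFilters

variable {P Q : Type*}

theorem isIdeal_preimage [SemilatticeSup P] [OrderBot P] [SemilatticeSup Q] [OrderBot Q]
    (φ : SupBotHom P Q) (I : Ideal Q) : IsIdeal (φ ⁻¹' (I : Set Q)) where
  IsLowerSet _ _ hyx hx := I.lower (OrderHomClass.mono φ hyx) hx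
  Nonempty := ⟨⊥, by simp⟩
  Directed x hx y hy := ⟨x ⊔ y, by simpa using ⟨hx, hy⟩, le_sup_left, le_sup_right⟩

theorem exists_isPrime_pfilter_of_disjoint [DistribLattice P] {F : PFilter P} {I : Ideal P}
    (hFI : Disjoint (F : Set P) I) :
    ∃ T : PFilter P, T.IsPrime ∧ F ≤ T ∧ Disjoint (T : Set P) I := by
  obtain ⟨J, hJ, hIJ, hFJ⟩ := DistribLattice.prime_ideal_of_disjoint_filter_ideal hFI
  let pair := hJ.toPrimePair
  exact ⟨pair.F, pair.F_isPrime, hFJ.subset_compl_right, pair.disjoint.symm.mono_right hIJ⟩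

theorem pfilter_isPrime_iff_bot_notMem_and_mem_or_mem [Lattice P] [OrderBot P] {F : PFilter P} :
    F.IsPrime ↔ ⊥ ∉ F ∧ ∀ x y : P, x ⊔ y ∈ F → x ∈ F ∨ y ∈ F := by
  constructor
  · intro hF
    let I := hF.toPrimePair.I
    have mem_I {x : P} : x ∈ I ↔ x ∉ F := Iff.rfl
    refine ⟨mem_I.mp I.bot_mem, fun x y hxy => ?_⟩
    by_contra! hxy'
    exact mem_I.mp (Ideal.sup_mem (mem_I.mpr hxy'.1) (mem_I.mpr hxy'.2)) hxy
  · rintro ⟨hbot, hsup⟩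
    exact ⟨fun _ _ hyx hx hy => hx (PFilter.mem_of_le hyx hy), ⟨⊥, hbot⟩, fun x hx y hy =>
      ⟨x ⊔ y, fun hxy => (hsup x y hxy).elim hx hy, le_sup_left, le_sup_right⟩⟩

theorem isLatFilter_iff_isPFilter [HeytingAlgebra P] {F : Set P} : IsLatFilter F ↔ IsPFilter F := by
  constructor
  · rintro ⟨hne, hup, hinf⟩
    exact .of_def hne (fun x hx y hy => ⟨x ⊓ y, hinf x y hx hy, inf_le_left, inf_le_right⟩)
      fun hxy hx => hup _ _ hx hxy
  · intro hF
    let G : PFilter P := hF.toPFilter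
    exact ⟨G.nonempty, fun _ _ hx hxy => G.mem_of_le hxy hx, fun _ _ hx hy => G.inf_mem hx hy⟩

theorem isPrimeFilter_iff_exists_pfilter [HeytingAlgebra P] {S : Set P} :
    IsPrimeFilter S ↔ ∃ F : PFilter P, F.IsPrime ∧ (F : Set P) = S := by
  constructor
  · rintro ⟨hS, hprime⟩
    exact ⟨(isLatFilter_iff_isPFilter.mp hS).toPFilter,
      pfilter_isPrime_iff_bot_notMem_and_mem_or_mem.mpr hprime, rfl⟩
  · rintro ⟨F, hF, rfl⟩
    exact ⟨isLatFilter_iff_isPFilter.mpr F.isPFilter,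
      pfilter_isPrime_iff_bot_notMem_and_mem_or_mem.mp hF⟩

end PrimeFilters

/-- A pair of negative modal operators between bounded lattices: `g` (possibly not) turns finite
meets into joins, `f` (necessarily not) turns finite joins into meets, and the two interact
through (T7). This is the part of a tense H-algebra that governs `g`; the pair `(h, p)` is another
instance. -/
structure IsNegModalPair {A B : Type*} [Lattice A] [BoundedOrder A] [Lattice B] [BoundedOrder B]
    (g f : A → B) : Prop where
  g_top : g ⊤ = ⊥
  g_inf : ∀ x y, g (x ⊓ y) = g x ⊔ g y
  f_bot : f ⊥ = ⊤
  f_sup : ∀ x y, f (x ⊔ y) = f x ⊓ f y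
  g_inf_f_le : ∀ x y, g x ⊓ f y ≤ g (x ⊔ y)

/-- The accessibility relation `R_A` of the canonical frame, for sets of elements in place of prime
filters. -/
def CanonicalRel {A B : Type*} (g f : A → B) (S : Set B) (T : Set A) : Prop :=
  (∀ x, f x ∈ S → x ∉ T) ∧ ∀ x, x ∉ T → g x ∈ S

theorem IsTenseH.isNegModalPair {A : Type*} [HeytingAlgebra A] {g h f p : A → A}
    (H : IsTenseH g h f p) : IsNegModalPair g f :=
  ⟨H.t1g, H.t3g, H.t2f, H.t4f, H.t7g⟩

namespace IsNegModalPair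

variable {A B : Type*} [Lattice B] [BoundedOrder B] {S : PFilter B}

section Lattice

variable [Lattice A] [BoundedOrder A] {g f : A → B}

theorem antitone_g (H : IsNegModalPair g f) : Antitone g := fun x y hxy => by
  rw [← inf_eq_left.mpr hxy, H.g_inf]
  exact le_sup_right

theorem isIdeal_preimage_f (H : IsNegModalPair g f) (S : PFilter B) :
    IsIdeal (f ⁻¹' (S : Set B)) :=
  let φ : SupBotHom A Bᵒᵈ := ⟨⟨f, H.f_sup⟩, H.f_bot⟩
  isIdeal_preimage φ S.dual

theorem isPFilter_preimage_g_compl (H : IsNegModalPair g f) (hS : S.IsPrime) :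
    IsPFilter (g ⁻¹' (S : Set B)ᶜ) :=
  let γ : SupBotHom Aᵒᵈ B := ⟨⟨g, H.g_inf⟩, H.g_top⟩
  isIdeal_preimage γ hS.toPrimePair.I

theorem g_mem_of_le_sup (H : IsNegModalPair g f) {a x y : A} (ha : g a ∈ S) (hy : f y ∈ S)
    (hx : x ≤ y ⊔ a) : g x ∈ S := by
  have hay : g (a ⊔ y) ∈ S := PFilter.mem_of_le (H.g_inf_f_le a y) (PFilter.inf_mem ha hy)
  exact PFilter.mem_of_le (H.antitone_g (sup_comm y a ▸ hx)) hay

end Lattice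

variable [DistribLattice A] [BoundedOrder A] {g f : A → B}

theorem exists_isPrime_canonicalRel_notMem (H : IsNegModalPair g f) (hS : S.IsPrime) {a : A}
    (ha : g a ∈ S) : ∃ T : PFilter A, T.IsPrime ∧ CanonicalRel g f S T ∧ a ∉ T := by
  let F : PFilter A := (H.isPFilter_preimage_g_compl hS).toPFilter
  let I : Ideal A := (H.isIdeal_preimage_f S).toIdeal
  have hFI : Disjoint (F : Set A) (I ⊔ Ideal.principal a : Ideal A) := by
    refine Set.disjoint_left.mpr fun x hxF hxI => hxF ?_
    obtain ⟨y, hy, hxy⟩ := (Lattice.mem_ideal_sup_principal a x I).mp hxI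
    exact H.g_mem_of_le_sup ha hy hxy
  obtain ⟨T, hT, hFT, hTI⟩ := exists_isPrime_pfilter_of_disjoint hFI
  have notMem_T {x : A} (hx : x ∈ I ⊔ Ideal.principal a) : x ∉ T := Set.disjoint_right.mp hTI hx
  refine ⟨T, hT, ⟨fun x hx => notMem_T ?_, fun x hx => ?_⟩, notMem_T ?_⟩
  · exact Ideal.mem_of_mem_of_le hx le_sup_left
  · by_contra hgx
    exact hx (hFT hgx)
  · exact Ideal.mem_of_mem_of_le Ideal.mem_principal_self le_sup_right

end IsNegModalPair

theorem stmt18_general {A B : Type*} [DistribLattice A] [BoundedOrder A] [Lattice B]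
    [BoundedOrder B] {g f : A → B} (H : IsNegModalPair g f) {S : PFilter B} (hS : S.IsPrime)
    (a : A) :
    g a ∉ S ↔ ∀ T : PFilter A, T.IsPrime → CanonicalRel g f S T → a ∈ T := by
  constructor
  · intro hga T _ hST
    by_contra haT
    exact hga (hST.2 a haT)
  · intro hall hga
    obtain ⟨T, hT, hST, haT⟩ := H.exists_isPrime_canonicalRel_notMem hS hga
    exact haT (hall T hT hST)

theorem stmt18 {A : Type*} [HeytingAlgebra A] (g h f p : A → A)
    (H : IsTenseH g h f p) (S : Set A) (hS : IsPrimeFilter S) (a : A) :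
    g a ∉ S ↔
      ∀ T : Set A, IsPrimeFilter T →
        ((∀ x : A, f x ∈ S → x ∉ T) ∧ (∀ x : A, x ∉ T → g x ∈ S)) → a ∈ T := by
  obtain ⟨F, hF, rfl⟩ := isPrimeFilter_iff_exists_pfilter.mp hS
  simpa [isPrimeFilter_iff_exists_pfilter, CanonicalRel] using stmt18_general H.isNegModalPair hF a
end
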